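/- arXiv:2503.18448 — 2 statements merged into one kernel-verified Lean document; each statement's English description precedes it below -/
import Mathlib

section
/- Let F : ℂ → ℂ be holomorphic on ℂ with F(s) = Σ_{n=A}^∞ χ(n)·P'(n)/P(n)^s for all s with Re(s) > 1. Then for every positive integer m, F(1−m) = −(1/m)·Ψ_χ(P^m) − Σ_{n=1}^{A−1} χ(n)·P'(n)·P(n)^{m−1}. -/
/-- The linear form `Ψ_χ` applied to a real polynomial `Q`, where `ψ m = Ψ_χ(X^m)` is the
sequence of moments attached to `χ`. -/
noncomputable def PsiPolyR (ψ : ℕ → ℂ) (Q : Polynomial ℝ) : ℂ :=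
  ∑ k ∈ Q.support, (Complex.ofReal (Q.coeff k)) * ψ k

/-!
Summing `χ n * a n` by parts repeatedly, each time against the periodic primitive of mean zero,
replaces the series by a boundary term, linear in `a`, and a series in the `K`-th differences
`Δ^K a`. For `a n = P'(n) / P(n) ^ s` these differences are `O(n ^ (d * (1 - re s) - 1 - K))`, where
`d` is the degree of `P`, so the identity continues the series analytically to `-m < re s` once `K`
is large. At `s = 1 - m` the sequence `a` is polynomial of degree less than `K`, the remaining
series vanishes, and only the boundary form is left. On the derivatives `Q'` it is `-Ψ_χ(Q)`: the
sum of both forms is invariant under `Q(X) ↦ Q(X + N)`, and a linear form with this invariance is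
zero.
-/

section ZeroMeanPeriodic

open Finset Function
open scoped fwdDiff

variable {𝕜 : Type*} [Field 𝕜] {N : ℕ} {c : ℕ → 𝕜}

/-- A sequence of period `N` summing to zero over a period, so that its partial sums are again
periodic. -/
structure ZeroMeanPeriodic (N : ℕ) (c : ℕ → 𝕜) : Prop where
  periodic : Periodic c N
  sum_range_eq_zero : ∑ n ∈ range N, c n = 0

/-- The discrete primitive of `c` whose constant of summation is chosen so that the mean over
`0, …, N - 1` vanishes. -/
def zeroMeanPrimitive (N : ℕ) (c : ℕ → 𝕜) (n : ℕ) : 𝕜 :=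
  ∑ i ∈ range n, c i - (∑ k ∈ range N, ∑ i ∈ range k, c i) / N

lemma zeroMeanPrimitive_succ (N : ℕ) (c : ℕ → 𝕜) (n : ℕ) :
    zeroMeanPrimitive N c (n + 1) = zeroMeanPrimitive N c n + c n := by
  simp only [zeroMeanPrimitive, sum_range_succ]
  ring

lemma ZeroMeanPeriodic.primitive [CharZero 𝕜] (hc : ZeroMeanPeriodic N c) :
    ZeroMeanPeriodic N (zeroMeanPrimitive N c) where
  periodic n := by
    induction n with
    | zero => simp [zeroMeanPrimitive, hc.sum_range_eq_zero]
    | succ n ih =>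
      rw [Nat.add_right_comm, zeroMeanPrimitive_succ, ih, hc.periodic, zeroMeanPrimitive_succ]
  sum_range_eq_zero := by
    rcases eq_or_ne N 0 with rfl | hN
    · simp
    · simp only [zeroMeanPrimitive, sum_sub_distrib, sum_const, card_range, nsmul_eq_mul]
      field_simp
      ring

lemma ZeroMeanPeriodic.neg_succ (hc : ZeroMeanPeriodic N c) :
    ZeroMeanPeriodic N fun n => -c (n + 1) where
  periodic n := by simp only [Nat.add_right_comm n N, hc.periodic (n + 1)]
  sum_range_eq_zero := by
    have hshift := (sum_range_succ' c N).symm.trans (sum_range_succ c N)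
    rw [hc.periodic.eq, add_left_inj] at hshift
    rw [sum_neg_distrib, hshift, hc.sum_range_eq_zero, neg_zero]

/-- The weights produced by `k` summations by parts against `c`; the shift by one comes from
pairing a primitive at `n + 1` with the forward difference at `n`. -/
def abelWeight (N : ℕ) (c : ℕ → 𝕜) : ℕ → ℕ → 𝕜
  | 0 => c
  | k + 1 => fun n => -zeroMeanPrimitive N (abelWeight N c k) (n + 1)

lemma ZeroMeanPeriodic.weight [CharZero 𝕜] (hc : ZeroMeanPeriodic N c) :
    ∀ k, ZeroMeanPeriodic N (abelWeight N c k)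
  | 0 => hc
  | k + 1 => (hc.weight k).primitive.neg_succ

/-- The boundary term at `0` of `K` summations by parts against `c`, a linear form in the
summed sequence. -/
def abelBoundary (N : ℕ) (c : ℕ → 𝕜) (K : ℕ) : (ℕ → 𝕜) →ₗ[𝕜] 𝕜 where
  toFun a := -∑ j ∈ range K, zeroMeanPrimitive N (abelWeight N c j) 0 * (Δ_[1])^[j] a 0
  map_add' a b := by
    simp only [fwdDiff_iter_add, Pi.add_apply, mul_add, sum_add_distrib, neg_add]
  map_smul' r a := by
    simp only [fwdDiff_iter_const_smul, Pi.smul_apply, mul_smul_comm, ← smul_sum, smul_neg,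
      RingHom.id_apply]

lemma abelBoundary_apply (N : ℕ) (c : ℕ → 𝕜) (K : ℕ) (a : ℕ → 𝕜) :
    abelBoundary N c K a =
      -∑ j ∈ range K, zeroMeanPrimitive N (abelWeight N c j) 0 * (Δ_[1])^[j] a 0 :=
  rfl

lemma sum_range_mul_eq_add_sum_fwdDiff (N : ℕ) (c a : ℕ → 𝕜) (T : ℕ) :
    ∑ n ∈ range T, c n * a n =
      zeroMeanPrimitive N c T * a T - zeroMeanPrimitive N c 0 * a 0 +
        ∑ n ∈ range T, -zeroMeanPrimitive N c (n + 1) * Δ_[1] a n := by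
  induction T with
  | zero => simp
  | succ T ih =>
    rw [sum_range_succ, sum_range_succ, ih, zeroMeanPrimitive_succ, fwdDiff]
    ring

theorem ZeroMeanPeriodic.sum_range_mul_eq_abelBoundary [CharZero 𝕜] (hc : ZeroMeanPeriodic N c)
    (K : ℕ) (a : ℕ → 𝕜) (q : ℕ) :
    ∑ n ∈ range (q * N), c n * a n =
      abelBoundary N c K a - abelBoundary N c K (fun n => a (n + q * N)) +
        ∑ n ∈ range (q * N), abelWeight N c K n * (Δ_[1])^[K] a n := by
  induction K with
  | zero => simp [abelBoundary_apply, abelWeight]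
  | succ K ih =>
    have hperiod : zeroMeanPrimitive N (abelWeight N c K) (q * N) =
        zeroMeanPrimitive N (abelWeight N c K) 0 :=
      (hc.weight K).primitive.periodic.nat_mul_eq q
    rw [ih, sum_range_mul_eq_add_sum_fwdDiff N (abelWeight N c K), hperiod]
    simp only [abelBoundary_apply, fwdDiff_iter_comp_add, sum_range_succ, iterate_succ_apply',
      abelWeight, zero_add]
    ring

end ZeroMeanPeriodic

section PolynomialSequences

open Finset Polynomial
open scoped fwdDiff

variable {𝕜 : Type*} [Field 𝕜] {N : ℕ}

lemma fwdDiff_iter_comp_natCast_add {R G : Type*} [AddCommMonoidWithOne R] [AddCommGroup G]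
    (f : R → G) (B k n : ℕ) :
    (Δ_[1])^[k] (fun n : ℕ => f ((n + B : ℕ) : R)) n = (Δ_[1])^[k] f ((n + B : ℕ) : R) := by
  simp [fwdDiff_iter_eq_sum_shift, add_right_comm]

lemma fwdDiff_iter_eval_natCast_add_eq_zero {R : Type*} [CommRing R] {Q : R[X]} {K : ℕ}
    (hQ : Q.natDegree < K) (B n : ℕ) :
    (Δ_[1])^[K] (fun n : ℕ => Q.eval ((n + B : ℕ) : R)) n = 0 := by
  rw [fwdDiff_iter_comp_natCast_add (fun x => Q.eval x), fwdDiff_iter_eq_zero_of_degree_lt hQ,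
    Pi.zero_apply]

lemma ZeroMeanPeriodic.sum_range_mul_eval_eq_abelBoundary_sub [CharZero 𝕜] {c : ℕ → 𝕜}
    (hc : ZeroMeanPeriodic N c) {K : ℕ} {Q : 𝕜[X]} (hQ : Q.natDegree < K) (q : ℕ) :
    ∑ n ∈ range (q * N), c n * Q.eval ((n + 1 : ℕ) : 𝕜) =
      abelBoundary N c K (fun n => Q.eval ((n + 1 : ℕ) : 𝕜)) -
        abelBoundary N c K (fun n => Q.eval ((n + (q * N + 1) : ℕ) : 𝕜)) := by
  rw [hc.sum_range_mul_eq_abelBoundary K]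
  simp only [fwdDiff_iter_eval_natCast_add_eq_zero hQ, mul_zero, sum_const_zero, add_zero,
    add_assoc]

/-- The linear form on polynomials with moments `ψ`, that is, `X ^ k ↦ ψ k`. -/
noncomputable def momentForm (ψ : ℕ → 𝕜) : 𝕜[X] →ₗ[𝕜] 𝕜 :=
  lsum fun k => LinearMap.toSpanSingleton 𝕜 𝕜 (ψ k)

lemma momentForm_monomial (ψ : ℕ → 𝕜) (k : ℕ) (r : 𝕜) :
    momentForm ψ (monomial k r) = r * ψ k := by
  simp [momentForm, sum_monomial_index]

/-- `ψ` is the sequence of moments `Ψ_χ(X^m)`: the generating function identity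
`t (∑ χ(n) e^{nt}) / (1 - e^{Nt}) = -∑ ψ(m) t^m / m!`, cleared of its denominator. -/
def IsMomentSequence [Algebra ℚ 𝕜] (N : ℕ) (χ ψ : ℕ → 𝕜) : Prop :=
  PowerSeries.X * (∑ n ∈ Icc 1 N,
      PowerSeries.C (χ n) * PowerSeries.rescale (n : 𝕜) (PowerSeries.exp 𝕜)) =
    (1 - PowerSeries.rescale (N : 𝕜) (PowerSeries.exp 𝕜)) *
      (-PowerSeries.mk fun m => ψ m / (m.factorial : 𝕜))

lemma factorial_mul_coeff_rescale_exp_mul_mk [Algebra ℚ 𝕜] (ψ : ℕ → 𝕜) (h : 𝕜) (k : ℕ) :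
    (k.factorial : 𝕜) * PowerSeries.coeff k (PowerSeries.rescale h (PowerSeries.exp 𝕜) *
        PowerSeries.mk fun m => ψ m / (m.factorial : 𝕜)) =
      momentForm ψ (taylor h (X ^ k)) := by
  have : CharZero 𝕜 := algebraRat.charZero 𝕜
  rw [taylor_X_pow, add_pow, map_sum, mul_comm (PowerSeries.rescale h _), PowerSeries.coeff_mul,
    Nat.sum_antidiagonal_eq_sum_range_succ_mk, mul_sum]
  refine sum_congr rfl fun j hj => ?_
  have hmonomial : (X ^ j * C h ^ (k - j) * (k.choose j : 𝕜[X])) =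
      monomial j (h ^ (k - j) * (k.choose j : 𝕜)) := by
    rw [← C_mul_X_pow_eq_monomial, C_mul, C_pow, C_eq_natCast]
    ring
  rw [hmonomial, momentForm_monomial, Nat.cast_choose 𝕜 (mem_range_succ_iff.mp hj)]
  simp only [PowerSeries.coeff_mk, PowerSeries.coeff_rescale, PowerSeries.coeff_exp, map_div₀,
    map_one, map_natCast]
  field_simp

lemma factorial_mul_coeff_X_mul_rescale_exp [Algebra ℚ 𝕜] (x : 𝕜) (k : ℕ) :
    (k.factorial : 𝕜) *
        PowerSeries.coeff k (PowerSeries.X * PowerSeries.rescale x (PowerSeries.exp 𝕜)) =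
      (derivative (X ^ k : 𝕜[X])).eval x := by
  have : CharZero 𝕜 := algebraRat.charZero 𝕜
  cases k with
  | zero => simp
  | succ k =>
    have hfactorial : (k.factorial : 𝕜) ≠ 0 := Nat.cast_ne_zero.mpr k.factorial_ne_zero
    simp only [PowerSeries.coeff_succ_X_mul, PowerSeries.coeff_rescale, PowerSeries.coeff_exp,
      map_div₀, map_one, map_natCast, Nat.factorial_succ, derivative_X_pow, eval_mul, eval_pow,
      eval_X, eval_natCast, Nat.add_sub_cancel, Nat.cast_mul]
    field_simp

theorem IsMomentSequence.momentForm_taylor [Algebra ℚ 𝕜] {χ ψ : ℕ → 𝕜}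
    (hψ : IsMomentSequence N χ ψ) (Q : 𝕜[X]) :
    momentForm ψ (taylor (N : 𝕜) Q) =
      momentForm ψ Q + ∑ n ∈ Icc 1 N, χ n * (derivative Q).eval (n : 𝕜) := by
  induction Q using Polynomial.induction_on' with
  | add p q hp hq =>
    simp only [map_add, hp, hq, eval_add, mul_add, sum_add_distrib]
    ring
  | monomial k r =>
    have hfactorial : (k.factorial : 𝕜) ≠ 0 := by
      have : CharZero 𝕜 := algebraRat.charZero 𝕜
      exact Nat.cast_ne_zero.mpr k.factorial_ne_zero
    have hcoeff := congrArg (fun f => (k.factorial : 𝕜) * PowerSeries.coeff k f) hψ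
    simp only [mul_sum, mul_left_comm PowerSeries.X, map_sum, PowerSeries.coeff_C_mul,
      mul_left_comm (k.factorial : 𝕜), factorial_mul_coeff_X_mul_rescale_exp, sub_mul, mul_neg,
      map_sub, map_neg, one_mul, mul_sub, factorial_mul_coeff_rescale_exp_mul_mk,
      PowerSeries.coeff_mk, mul_div_cancel₀ _ hfactorial] at hcoeff
    have hpow : momentForm ψ (X ^ k) = ψ k := by
      rw [X_pow_eq_monomial, momentForm_monomial, one_mul]
    rw [← mul_one r, ← smul_eq_mul, ← smul_monomial, ← X_pow_eq_monomial]
    simp only [map_smul, eval_smul, smul_eq_mul, mul_left_comm _ r, ← mul_sum, hcoeff, hpow]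
    ring

lemma apply_X_pow_eq_zero_of_taylor_invariant {R : Type*} [CommRing R] [IsDomain R] [CharZero R]
    {T : R[X] →ₗ[R] R} {h : R} (hh : h ≠ 0) {K : ℕ}
    (hT : ∀ Q : R[X], Q.natDegree ≤ K → T (taylor h Q) = T Q) {k : ℕ} (hk : k < K) :
    T (X ^ k) = 0 := by
  induction k using Nat.strong_induction_on with
  | _ k ih =>
    have hinvariant := hT (X ^ (k + 1)) (by simpa using hk)
    have hterm (j : ℕ) : T (X ^ j * C h ^ (k + 1 - j) * ((k + 1).choose j : R[X])) =
        h ^ (k + 1 - j) * (k + 1).choose j * T (X ^ j) := by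
      rw [mul_assoc, mul_comm, ← C_eq_natCast, ← C_pow, ← C_mul, ← smul_eq_C_mul, map_smul,
        smul_eq_mul]
    have hlower : ∑ j ∈ range k, h ^ (k + 1 - j) * (k + 1).choose j * T (X ^ j) = 0 :=
      sum_eq_zero fun j hj => by
        rw [ih j (mem_range.mp hj) ((mem_range.mp hj).trans hk), mul_zero]
    rw [taylor_X_pow, add_pow, map_sum] at hinvariant
    simp only [hterm] at hinvariant
    rw [sum_range_succ, sum_range_succ, hlower] at hinvariant
    have hlinear : h * (k + 1) * T (X ^ k) = 0 := by simpa using hinvariant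
    exact (mul_eq_zero.mp hlinear).resolve_left (mul_ne_zero hh k.cast_add_one_ne_zero)

lemma apply_eq_zero_of_taylor_invariant {R : Type*} [CommRing R] [IsDomain R] [CharZero R]
    {T : R[X] →ₗ[R] R} {h : R} (hh : h ≠ 0) {K : ℕ}
    (hT : ∀ Q : R[X], Q.natDegree ≤ K → T (taylor h Q) = T Q) {Q : R[X]} (hQ : Q.natDegree < K) :
    T Q = 0 := by
  rw [Q.as_sum_range_C_mul_X_pow, map_sum]
  refine sum_eq_zero fun k hk => ?_
  rw [← smul_eq_C_mul, map_smul, apply_X_pow_eq_zero_of_taylor_invariant hh hT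
    ((mem_range_succ_iff.mp hk).trans_lt hQ), smul_zero]

lemma sum_Icc_one_eq_sum_range {M : Type*} [AddCommMonoid M] (f : ℕ → M) (T : ℕ) :
    ∑ n ∈ Icc 1 T, f n = ∑ n ∈ range T, f (n + 1) := by
  rw [range_eq_Ico, sum_Ico_add' f 0 T 1, zero_add, Ico_add_one_right_eq_Icc]

theorem IsMomentSequence.abelBoundary_eval_derivative [Algebra ℚ 𝕜] {χ ψ : ℕ → 𝕜}
    (hψ : IsMomentSequence N χ ψ) (hχ : ZeroMeanPeriodic N fun n => χ (n + 1)) (hN : N ≠ 0)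
    {K : ℕ} {Q : 𝕜[X]} (hQ : Q.natDegree < K) :
    abelBoundary N (fun n => χ (n + 1)) K (fun n => (derivative Q).eval ((n + 1 : ℕ) : 𝕜)) =
      -momentForm ψ Q := by
  have : CharZero 𝕜 := algebraRat.charZero 𝕜
  -- Both sides change by the same amount under `Q(X) ↦ Q(X + N)`, so `T` is invariant under it.
  let T : 𝕜[X] →ₗ[𝕜] 𝕜 := momentForm ψ + abelBoundary N (fun n => χ (n + 1)) K ∘ₗ
    LinearMap.pi (fun n : ℕ => leval ((n + 1 : ℕ) : 𝕜)) ∘ₗ derivative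
  have hT (R : 𝕜[X]) : T R = momentForm ψ R + abelBoundary N (fun n => χ (n + 1)) K
      (fun n => (derivative R).eval ((n + 1 : ℕ) : 𝕜)) := rfl
  have hinvariant (R : 𝕜[X]) (hR : R.natDegree ≤ K) : T (taylor (N : 𝕜) R) = T R := by
    have hderiv : (derivative R).natDegree < K := by
      have := natDegree_derivative_le R
      omega
    have hshift := hχ.sum_range_mul_eval_eq_abelBoundary_sub hderiv 1
    have htaylor (n : ℕ) : (derivative (taylor (N : 𝕜) R)).eval ((n + 1 : ℕ) : 𝕜) =
        (derivative R).eval ((n + (1 * N + 1) : ℕ) : 𝕜) := by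
      rw [taylor_apply, derivative_comp]
      simp [add_assoc, add_comm (1 : 𝕜)]
    rw [hT, hT, hψ.momentForm_taylor, sum_Icc_one_eq_sum_range]
    simp only [htaylor]
    rw [one_mul] at hshift ⊢
    rw [hshift]
    ring
  have hzero := apply_eq_zero_of_taylor_invariant (Nat.cast_ne_zero.mpr hN) hinvariant hQ
  rw [hT] at hzero
  linear_combination hzero

end PolynomialSequences

section Summation

open Filter Finset Function Topology
open scoped fwdDiff

lemma exists_norm_le_of_periodic {E : Type*} [SeminormedAddCommGroup E] {N : ℕ} {c : ℕ → E}
    (hc : Periodic c N) (hN : N ≠ 0) : ∃ C, ∀ n, ‖c n‖ ≤ C := by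
  refine ⟨∑ i ∈ range N, ‖c i‖, fun n => ?_⟩
  rw [← hc.map_mod_nat n]
  exact single_le_sum (f := fun i => ‖c i‖) (fun _ _ => norm_nonneg _)
    (mem_range.mpr (Nat.mod_lt n (Nat.pos_of_ne_zero hN)))

lemma summable_norm_fwdDiff_iter {E : Type*} [SeminormedAddCommGroup E] {a : ℕ → E}
    (ha : Summable fun n => ‖a n‖) (j : ℕ) : Summable fun n => ‖(Δ_[1])^[j] a n‖ := by
  induction j with
  | zero => exact ha
  | succ j ih =>
    simp only [iterate_succ_apply', fwdDiff]
    exact (((summable_nat_add_iff 1).mpr ih).add ih).of_nonneg_of_le (fun _ => norm_nonneg _)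
      fun n => norm_sub_le _ _

lemma tendsto_fwdDiff_iter_nat_add_zero {E : Type*} [AddCommGroup E] [TopologicalSpace E]
    [IsTopologicalAddGroup E] {a : ℕ → E}
    (ha : Tendsto a atTop (𝓝 0)) (j : ℕ) :
    Tendsto (fun T => (Δ_[1])^[j] (fun n => a (n + T)) 0) atTop (𝓝 0) := by
  have hterm (i : ℕ) : Tendsto (fun T => a (0 + i • 1 + T)) atTop (𝓝 0) :=
    ha.comp (tendsto_add_atTop_nat _ |>.congr fun T => add_comm _ _)
  simp only [fwdDiff_iter_eq_sum_shift]
  simpa using tendsto_finsetSum (range (j + 1)) fun i _ =>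
    (hterm i).const_smul ((-1 : ℤ) ^ (j - i) * j.choose i)

variable {𝕜 : Type*} [NormedField 𝕜] {N : ℕ} {c : ℕ → 𝕜}

lemma summable_norm_mul_of_periodic (hc : Periodic c N) (hN : N ≠ 0) {a : ℕ → 𝕜}
    (ha : Summable fun n => ‖a n‖) : Summable fun n => ‖c n * a n‖ := by
  obtain ⟨C, hC⟩ := exists_norm_le_of_periodic hc hN
  refine (ha.mul_left C).of_nonneg_of_le (fun _ => norm_nonneg _) fun n => ?_
  rw [norm_mul]
  gcongr
  exact hC n

lemma tendsto_abelBoundary_nat_add_zero (N : ℕ) (c : ℕ → 𝕜) (K : ℕ) {a : ℕ → 𝕜}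
    (ha : Tendsto a atTop (𝓝 0)) :
    Tendsto (fun T => abelBoundary N c K fun n => a (n + T)) atTop (𝓝 0) := by
  simpa [abelBoundary_apply] using (tendsto_finsetSum (range K) fun j _ =>
    (tendsto_fwdDiff_iter_nat_add_zero ha j).const_mul
      (zeroMeanPrimitive N (abelWeight N c j) 0)).neg

/-- The sum of `c n * a n` after `K` summations by parts: it equals that sum when `a` is absolutely
summable, and converges as soon as the `K`-th differences of `a` are. -/
noncomputable def abelSum (N : ℕ) (c : ℕ → 𝕜) (K : ℕ) (a : ℕ → 𝕜) : 𝕜 :=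
  abelBoundary N c K a + ∑' n, abelWeight N c K n * (Δ_[1])^[K] a n

theorem ZeroMeanPeriodic.tsum_mul_eq_abelSum [CharZero 𝕜] [CompleteSpace 𝕜]
    (hc : ZeroMeanPeriodic N c) (hN : N ≠ 0) (K : ℕ) {a : ℕ → 𝕜} (ha : Summable fun n => ‖a n‖) :
    ∑' n, c n * a n = abelSum N c K a := by
  have hmultiples : Tendsto (fun q : ℕ => q * N) atTop atTop :=
    tendsto_id.atTop_mul_const' (Nat.pos_of_ne_zero hN)
  have hleft := (summable_norm_mul_of_periodic hc.periodic hN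
    ha).of_norm.hasSum.tendsto_sum_nat.comp hmultiples
  have hright := (summable_norm_mul_of_periodic (hc.weight K).periodic hN
    (summable_norm_fwdDiff_iter ha K)).of_norm.hasSum.tendsto_sum_nat.comp hmultiples
  have hboundary := (tendsto_abelBoundary_nat_add_zero N c K
    ha.of_norm.tendsto_atTop_zero).comp hmultiples
  refine tendsto_nhds_unique hleft ?_
  simpa only [abelSum, sub_zero, comp_def] using ((hboundary.const_sub (abelBoundary N c K a)).add
    hright).congr fun q => (hc.sum_range_mul_eq_abelBoundary K a q).symm

lemma differentiableOn_fwdDiff_iter {𝕜 E F M : Type*} [NontriviallyNormedField 𝕜]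
    [NormedAddCommGroup E] [NormedSpace 𝕜 E] [NormedAddCommGroup F] [NormedSpace 𝕜 F]
    [AddCommMonoid M] {U : Set E} {a : E → M → F}
    (ha : ∀ n, DifferentiableOn 𝕜 (fun s => a s n) U) (h : M) (j : ℕ) (n : M) :
    DifferentiableOn 𝕜 (fun s => (Δ_[h])^[j] (a s) n) U := by
  simp only [fwdDiff_iter_eq_sum_shift, ← Int.cast_smul_eq_zsmul 𝕜]
  exact DifferentiableOn.fun_sum fun i _ => (ha _).const_smul _

theorem ZeroMeanPeriodic.differentiableOn_abelSum {c : ℕ → ℂ} (hc : ZeroMeanPeriodic N c)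
    (hN : N ≠ 0) {K : ℕ} {U : Set ℂ} (hU : IsOpen U) {a : ℂ → ℕ → ℂ} {u : ℕ → ℝ}
    (ha : ∀ n, DifferentiableOn ℂ (fun s => a s n) U) (hu : Summable u)
    (hau : ∀ n, ∀ s ∈ U, ‖(Δ_[1])^[K] (a s) n‖ ≤ u n) :
    DifferentiableOn ℂ (fun s => abelSum N c K (a s)) U := by
  obtain ⟨C, hC⟩ := exists_norm_le_of_periodic (hc.weight K).periodic hN
  simp only [abelSum, abelBoundary_apply]
  refine .add (.neg <| .fun_sum fun j _ => ((differentiableOn_fwdDiff_iter ha 1 j 0).const_mul _))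
    (Complex.differentiableOn_tsum_of_summable_norm (hu.mul_left C)
      (fun n => (differentiableOn_fwdDiff_iter ha 1 K n).const_mul _) hU fun n s hs => ?_)
  rw [norm_mul]
  exact mul_le_mul (hC n) (hau n s hs) (norm_nonneg _) ((norm_nonneg _).trans (hC n))

end Summation

section DerivativeBounds

open Function Set
open scoped fwdDiff

variable {E : Type*} [NormedAddCommGroup E] [NormedSpace ℝ E]

lemma norm_fwdDiff_iter_le_of_hasDerivAt {f : ℕ → ℝ → E} {x₀ C : ℝ}
    (hf : ∀ k, ∀ y ≥ x₀, HasDerivAt (f k) (f (k + 1) y) y) (K : ℕ)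
    (hC : ∀ y ≥ x₀, ‖f K y‖ ≤ C) {x : ℝ} (hx : x₀ ≤ x) : ‖(Δ_[1])^[K] (f 0) x‖ ≤ C := by
  induction K generalizing f with
  | zero => exact hC x hx
  | succ K ih =>
    rw [iterate_succ_apply]
    refine ih (f := fun k => Δ_[1] (f k)) (fun k y hy => ?_) fun y hy => ?_
    · exact ((hf k (y + 1) (by linarith)).comp_add_const y 1).sub (hf k y hy)
    · have hmean := (convex_Icc y (y + 1)).norm_image_sub_le_of_norm_hasDerivWithin_le
        (fun z hz => (hf K z (hy.trans hz.1)).hasDerivWithinAt)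
        (fun z hz => hC z (hy.trans hz.1)) (left_mem_Icc.mpr (by simp))
        (right_mem_Icc.mpr (by simp))
      simpa [fwdDiff] using hmean

end DerivativeBounds

section PolynomialPowers

open Filter Finset Polynomial Topology

/-- The polynomials `R k` for which `R k * P ^ (-s - k)` is the `k`-th derivative of
`P' * P ^ (-s)`. -/
noncomputable def derivNumerator (P : ℂ[X]) (s : ℂ) : ℕ → ℂ[X]
  | 0 => derivative P
  | k + 1 => derivative (derivNumerator P s k) * P -
      (s + k) • (derivNumerator P s k * derivative P)

lemma natDegree_derivNumerator_le (P : ℂ[X]) (s : ℂ) (k : ℕ) :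
    (derivNumerator P s k).natDegree ≤ (k + 1) * (P.natDegree - 1) := by
  induction k with
  | zero => simp [derivNumerator]
  | succ k ih =>
    refine (natDegree_sub_le _ _).trans (max_le ?_ ?_)
    · rcases eq_or_ne (derivNumerator P s k).natDegree 0 with hzero | hpos
      · simp [derivative_of_natDegree_zero hzero]
      · have := natDegree_derivative_lt hpos
        have : P.natDegree ≤ P.natDegree - 1 + 1 := by omega
        exact natDegree_mul_le.trans (by linarith)
    · exact (natDegree_smul_le _ _).trans <| natDegree_mul_le.trans <|
        (add_le_add ih (natDegree_derivative_le P)).trans_eq (by ring)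

lemma continuous_coeff_derivNumerator (P : ℂ[X]) (k i : ℕ) :
    Continuous fun s => (derivNumerator P s k).coeff i := by
  induction k generalizing i with
  | zero => exact continuous_const
  | succ k ih =>
    simp only [derivNumerator, coeff_sub, coeff_smul, coeff_mul, coeff_derivative]
    fun_prop

lemma exists_norm_eval_le_of_continuousOn_coeff {X 𝕜 : Type*} [TopologicalSpace X] [NormedField 𝕜]
    {S : Set X} (hS : IsCompact S) {R : X → 𝕜[X]} {n : ℕ}
    (hR : ∀ i, ContinuousOn (fun s => (R s).coeff i) S) (hn : ∀ s ∈ S, (R s).natDegree ≤ n) :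
    ∃ C, ∀ s ∈ S, ∀ z : 𝕜, 1 ≤ ‖z‖ → ‖(R s).eval z‖ ≤ C * ‖z‖ ^ n := by
  choose C hC using fun i => hS.exists_bound_of_continuousOn (hR i)
  refine ⟨∑ i ∈ range (n + 1), C i, fun s hs z hz => ?_⟩
  rw [eval_eq_sum_range' (Nat.lt_succ_of_le (hn s hs)), sum_mul]
  refine norm_sum_le_of_le _ fun i hi => ?_
  rw [norm_mul, norm_pow]
  have hCi : 0 ≤ C i := (norm_nonneg _).trans (hC i s hs)
  gcongr
  · exact hC i s hs
  · exact mem_range_succ_iff.mp hi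

lemma hasDerivAt_derivNumerator_mul_cpow (P : ℂ[X]) (s : ℂ) (k : ℕ) {x : ℝ}
    (hx : P.eval (x : ℂ) ∈ Complex.slitPlane) :
    HasDerivAt (fun x : ℝ => (derivNumerator P s k).eval (x : ℂ) * P.eval (x : ℂ) ^ (-s - k))
      ((derivNumerator P s (k + 1)).eval (x : ℂ) *
        P.eval (x : ℂ) ^ (-s - (k + 1 : ℕ))) x := by
  have hexp : -s - (k : ℂ) - 1 = -s - (k + 1 : ℕ) := by push_cast; ring
  have hcpow : P.eval (x : ℂ) ^ (-s - k) =
      P.eval (x : ℂ) ^ (-s - (k + 1 : ℕ)) * P.eval (x : ℂ) := by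
    have hne := Complex.slitPlane_ne_zero hx
    rw [← hexp, Complex.cpow_sub (-s - k) 1 hne, Complex.cpow_one, div_mul_cancel₀ _ hne]
  refine (((derivNumerator P s k).hasDerivAt (x : ℂ)).mul
    ((P.hasDerivAt (x : ℂ)).cpow_const hx)).comp_ofReal.congr_deriv ?_
  simp only [hexp, hcpow, derivNumerator, eval_sub, eval_mul, eval_smul, smul_eq_mul]
  ring

lemma tendsto_eval_atTop {P : ℝ[X]} (hP : P.natDegree ≠ 0) (hlead : 0 < P.leadingCoeff) :
    Tendsto (fun x => P.eval x) atTop atTop :=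
  P.tendsto_atTop_of_leadingCoeff_nonneg
    (natDegree_pos_iff_degree_pos.mp (Nat.pos_of_ne_zero hP)) hlead.le

lemma eventually_mul_pow_natDegree_le_eval {P : ℝ[X]} {b : ℝ} (hb : b < P.leadingCoeff) :
    ∀ᶠ x in atTop, b * x ^ P.natDegree ≤ P.eval x := by
  have hquotient : Tendsto (fun x => P.eval x / x ^ P.natDegree) atTop (𝓝 P.leadingCoeff) := by
    rcases eq_or_ne P 0 with rfl | hP
    · simp
    · simpa using div_tendsto_atTop_leadingCoeff_div_of_degree_eq P (X ^ P.natDegree)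
        (by rw [degree_X_pow, degree_eq_natDegree hP])
  filter_upwards [hquotient.eventually_const_le hb, eventually_gt_atTop 0] with x hx hpos
  exact (le_div_iff₀ (pow_pos hpos _)).mp hx

lemma eval_map_ofReal (P : ℝ[X]) (x : ℝ) :
    (P.map Complex.ofRealHom).eval (x : ℂ) = (P.eval x : ℝ) :=
  eval_map_apply Complex.ofRealHom x

theorem exists_eventually_norm_derivNumerator_mul_cpow_le {P : ℝ[X]} (hP : P.natDegree ≠ 0)
    (hlead : 0 < P.leadingCoeff) {S : Set ℂ} (hS : IsCompact S) {σ : ℝ}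
    (hσ : ∀ s ∈ S, σ ≤ s.re) {k : ℕ} (hk : 0 ≤ σ + k) :
    ∃ C, ∀ᶠ x : ℝ in atTop, ∀ s ∈ S,
      ‖(derivNumerator (P.map Complex.ofRealHom) s k).eval (x : ℂ) *
          (P.map Complex.ofRealHom).eval (x : ℂ) ^ (-s - k)‖ ≤
        C * x ^ (P.natDegree * (1 - σ) - 1 - k) := by
  obtain ⟨C, hC⟩ := exists_norm_eval_le_of_continuousOn_coeff hS
    (fun i => (continuous_coeff_derivNumerator (P.map Complex.ofRealHom) k i).continuousOn)
    (fun s _ => natDegree_derivNumerator_le _ s k)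
  rw [natDegree_map] at hC
  refine ⟨C * (P.leadingCoeff / 2) ^ (-(σ + k)), ?_⟩
  filter_upwards [eventually_ge_atTop 1, eventually_mul_pow_natDegree_le_eval (half_lt_self hlead),
    (tendsto_eval_atTop hP hlead).eventually_ge_atTop 1] with x hx hlower hone s hs
  have hx₀ : 0 < x := zero_lt_one.trans_le hx
  have hnumerator := hC s hs x (by simpa [abs_of_pos hx₀] using hx)
  have hpower : P.eval x ^ (-s.re - k) ≤
      (P.leadingCoeff / 2 * x ^ P.natDegree) ^ (-(σ + k)) :=
    (Real.rpow_le_rpow_of_exponent_le hone (by linarith [hσ s hs])).trans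
      (Real.rpow_le_rpow_of_nonpos (by positivity) hlower (by linarith))
  rw [norm_mul, eval_map_ofReal, Complex.norm_cpow_eq_rpow_re_of_pos (zero_lt_one.trans_le hone)]
  rw [Complex.norm_real, Real.norm_of_nonneg hx₀.le] at hnumerator
  calc _ ≤ C * x ^ ((k + 1) * (P.natDegree - 1)) *
        (P.leadingCoeff / 2 * x ^ P.natDegree) ^ (-(σ + k)) :=
        mul_le_mul hnumerator (by simpa using hpower) (by positivity)
          ((norm_nonneg _).trans hnumerator)
    _ = _ := by
      rw [Real.mul_rpow (by positivity) (by positivity), ← Real.rpow_natCast, ← Real.rpow_natCast,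
        ← Real.rpow_mul hx₀.le, mul_mul_mul_comm, ← Real.rpow_add hx₀]
      congr 2
      push_cast [Nat.one_le_iff_ne_zero.mpr hP]
      ring

end PolynomialPowers

section DirichletTerm

open Filter Polynomial
open scoped fwdDiff

/-- The summand `P'(x) / P(x) ^ s` of the Dirichlet-like series attached to `P`, as a function of
a real variable so that its differences can be compared with its derivatives. -/
noncomputable def dirichletTerm (P : ℝ[X]) (s : ℂ) (x : ℝ) : ℂ :=
  ((derivative P).eval x : ℝ) / ((P.eval x : ℝ) : ℂ) ^ s

lemma dirichletTerm_eq_derivNumerator_mul_cpow (P : ℝ[X]) (s : ℂ) (x : ℝ) :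
    dirichletTerm P s x = (derivNumerator (P.map Complex.ofRealHom) s 0).eval (x : ℂ) *
      (P.map Complex.ofRealHom).eval (x : ℂ) ^ (-s - (0 : ℕ)) := by
  simp only [dirichletTerm, derivNumerator, derivative_map, eval_map_ofReal, Nat.cast_zero,
    sub_zero, Complex.cpow_neg, div_eq_mul_inv]

lemma differentiable_dirichletTerm {P : ℝ[X]} {x : ℝ} (hx : P.eval x ≠ 0) :
    Differentiable ℂ fun s => dirichletTerm P s x := by
  have hne : ((P.eval x : ℝ) : ℂ) ≠ 0 := Complex.ofReal_ne_zero.mpr hx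
  exact (differentiable_const _).div (differentiable_id.const_cpow (.inl hne)) fun s => by
    simp [Complex.cpow_eq_zero_iff, hne]

lemma dirichletTerm_one_sub_natCast (P : ℝ[X]) {m : ℕ} (hm : 1 ≤ m) (x : ℝ) :
    dirichletTerm P (1 - m) x = ((derivative P).eval x : ℝ) * ((P.eval x : ℝ) : ℂ) ^ (m - 1) := by
  have hexp : (1 - m : ℂ) = -(m - 1 : ℕ) := by push_cast [hm]; ring
  rw [dirichletTerm, hexp, Complex.cpow_neg, Complex.cpow_natCast, div_inv_eq_mul]

lemma dirichletTerm_one_sub_natCast_eq_eval_derivative (P : ℝ[X]) {m : ℕ} (hm : 1 ≤ m) (x : ℝ) :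
    dirichletTerm P (1 - m) x =
      (derivative ((m : ℂ)⁻¹ • (P ^ m).map Complex.ofRealHom)).eval (x : ℂ) := by
  have hmne : (m : ℂ) ≠ 0 := Nat.cast_ne_zero.mpr (Nat.one_le_iff_ne_zero.mp hm)
  rw [dirichletTerm_one_sub_natCast P hm, derivative_smul, derivative_map, eval_smul,
    eval_map_ofReal, derivative_pow, smul_eq_mul]
  simp only [eval_mul, eval_C, eval_pow, Complex.ofReal_mul, Complex.ofReal_pow,
    Complex.ofReal_natCast]
  field_simp

theorem exists_eventually_norm_fwdDiff_iter_dirichletTerm_le {P : ℝ[X]} (hP : P.natDegree ≠ 0)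
    (hlead : 0 < P.leadingCoeff) {S : Set ℂ} (hS : IsCompact S) {σ : ℝ}
    (hσ : ∀ s ∈ S, σ ≤ s.re) {K : ℕ} (hK : 0 ≤ σ + K)
    (hexp : P.natDegree * (1 - σ) - 1 - K ≤ 0) :
    ∃ C, ∀ᶠ x : ℝ in atTop, ∀ s ∈ S,
      ‖(Δ_[1])^[K] (dirichletTerm P s) x‖ ≤ C * x ^ (P.natDegree * (1 - σ) - 1 - K) := by
  obtain ⟨C, hC⟩ := exists_eventually_norm_derivNumerator_mul_cpow_le hP hlead hS hσ hK
  have hpos := (tendsto_eval_atTop hP hlead).eventually_gt_atTop 0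
  refine ⟨C, ?_⟩
  filter_upwards [eventually_forall_ge_atTop.mpr (hC.and hpos), eventually_gt_atTop 0]
    with x hlarge hx s hs
  have hC_nonneg : 0 ≤ C := nonneg_of_mul_nonneg_left
    ((norm_nonneg _).trans ((hlarge x le_rfl).1 s hs)) (Real.rpow_pos_of_pos hx _)
  rw [funext (dirichletTerm_eq_derivNumerator_mul_cpow P s)]
  refine norm_fwdDiff_iter_le_of_hasDerivAt (x₀ := x) (f := fun k x =>
    (derivNumerator (P.map Complex.ofRealHom) s k).eval (x : ℂ) *
      (P.map Complex.ofRealHom).eval (x : ℂ) ^ (-s - k))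
    (fun k y hy => ?_) K (fun y hy => ?_) le_rfl
  · refine hasDerivAt_derivNumerator_mul_cpow _ s k ?_
    rw [eval_map_ofReal, Complex.ofReal_mem_slitPlane]
    exact (hlarge y hy).2
  · exact ((hlarge y hy).1 s hs).trans (mul_le_mul_of_nonneg_left
      (Real.rpow_le_rpow_of_nonpos hx hy hexp) hC_nonneg)

lemma summable_norm_dirichletTerm {P : ℝ[X]} (hP : P.natDegree ≠ 0) (hlead : 0 < P.leadingCoeff)
    {s : ℂ} (hs : 1 < s.re) : Summable fun n : ℕ => ‖dirichletTerm P s n‖ := by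
  have hdegree : (1 : ℝ) ≤ P.natDegree := Nat.one_le_cast.mpr (Nat.one_le_iff_ne_zero.mpr hP)
  have hexp : P.natDegree * (1 - s.re) - 1 < -1 := by nlinarith
  obtain ⟨C, hC⟩ := exists_eventually_norm_fwdDiff_iter_dirichletTerm_le (K := 0) hP hlead
    (isCompact_singleton (x := s)) (fun t ht => (congrArg Complex.re ht).ge)
    (by simpa using (zero_lt_one.trans hs).le) (by push_cast; linarith)
  refine ((Real.summable_nat_rpow.mpr hexp).mul_left C).of_norm_bounded_eventually_nat ?_
  filter_upwards [tendsto_natCast_atTop_atTop.eventually hC] with n hn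
  simpa using hn s rfl

theorem ZeroMeanPeriodic.eventually_differentiableOn_abelSum_dirichletTerm {N : ℕ} {c : ℕ → ℂ}
    (hc : ZeroMeanPeriodic N c) (hN : N ≠ 0) {P : ℝ[X]} (hP : P.natDegree ≠ 0)
    (hlead : 0 < P.leadingCoeff) {S U : Set ℂ} (hS : IsCompact S) (hU : IsOpen U) (hUS : U ⊆ S)
    {σ : ℝ} (hσ : ∀ s ∈ S, σ ≤ s.re) {K : ℕ} (hK : 0 ≤ σ + K)
    (hexp : P.natDegree * (1 - σ) - 1 - K < -1) :
    ∀ᶠ B : ℕ in atTop, DifferentiableOn ℂ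
      (fun s => abelSum N c K fun n => dirichletTerm P s (n + B : ℕ)) U := by
  obtain ⟨C, hC⟩ := exists_eventually_norm_fwdDiff_iter_dirichletTerm_le hP hlead hS hσ hK
    (hexp.le.trans (by norm_num))
  have hpos := (tendsto_eval_atTop hP hlead).eventually_gt_atTop 0
  filter_upwards [tendsto_natCast_atTop_atTop.eventually
    (eventually_forall_ge_atTop.mpr (hC.and hpos))] with B hB
  have hlarge (n : ℕ) := hB (n + B : ℕ) (Nat.cast_le.mpr (Nat.le_add_left B n))
  refine hc.differentiableOn_abelSum hN hU
    (fun n => (differentiable_dirichletTerm (hlarge n).2.ne').differentiableOn)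
    (((summable_nat_add_iff B).mpr (Real.summable_nat_rpow.mpr hexp)).mul_left C)
    fun n s hs => ?_
  rw [fwdDiff_iter_comp_natCast_add (dirichletTerm P s)]
  exact (hlarge n).1 s (hUS hs)

lemma re_sub_dist_le_re (s z : ℂ) : z.re - dist s z ≤ s.re := by
  have := (abs_le.mp (Complex.abs_re_le_norm (s - z))).1
  rw [Complex.dist_eq]
  rw [Complex.sub_re] at this
  linarith

theorem ZeroMeanPeriodic.exists_differentiableOn_abelSum_dirichletTerm {N : ℕ} {c : ℕ → ℂ}
    (hc : ZeroMeanPeriodic N c) (hN : N ≠ 0) {P : ℝ[X]} (hP : P.natDegree ≠ 0)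
    (hlead : 0 < P.leadingCoeff) {m K : ℕ} (hK : P.natDegree * (m + 1) < K) (A : ℕ) :
    ∃ q, A ≤ q * N + 1 ∧ DifferentiableOn ℂ
      (fun s => abelSum N c K fun n => dirichletTerm P s (n + (q * N + 1) : ℕ))
      (Metric.ball 2 (m + 2)) := by
  have hmultiples : Tendsto (fun q : ℕ => q * N + 1) atTop atTop :=
    (tendsto_add_atTop_nat 1).comp (tendsto_id.atTop_mul_const' (Nat.pos_of_ne_zero hN))
  have hre (s : ℂ) (hs : s ∈ Metric.closedBall 2 (m + 2 : ℝ)) : (-m : ℝ) ≤ s.re := by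
    have := re_sub_dist_le_re s 2
    rw [Complex.re_ofNat] at this
    linarith [Metric.mem_closedBall.mp hs]
  have hmK : m + 1 ≤ K := (Nat.le_mul_of_pos_left _ (Nat.pos_of_ne_zero hP)).trans hK.le
  have hmK_real : (m + 1 : ℝ) ≤ K := mod_cast hmK
  have hK_real : (P.natDegree * (m + 1) : ℝ) < K := mod_cast hK
  exact (hmultiples.eventually ((eventually_ge_atTop A).and
    (hc.eventually_differentiableOn_abelSum_dirichletTerm hN hP hlead
      (isCompact_closedBall 2 (m + 2 : ℝ)) Metric.isOpen_ball Metric.ball_subset_closedBall hre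
      (by linarith) (by linarith)))).exists

end DirichletTerm

section SpecialValue

open Finset Polynomial

lemma ZeroMeanPeriodic.tsum_nat_add_eq_sum_Ico_add_abelSum {𝕜 : Type*} [NormedField 𝕜]
    [CharZero 𝕜] [CompleteSpace 𝕜] {N : ℕ} {χ : ℕ → 𝕜} (hχ : ZeroMeanPeriodic N fun n => χ (n + 1))
    (hN : N ≠ 0) (K : ℕ) {a : ℕ → 𝕜} (ha : Summable fun n => ‖a n‖) {A q : ℕ}
    (hA : A ≤ q * N + 1) :
    ∑' n, χ (n + A) * a (n + A) = ∑ n ∈ Ico A (q * N + 1), χ n * a n +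
      abelSum N (fun n => χ (n + 1)) K fun n => a (n + (q * N + 1)) := by
  have hshift : (fun n => χ (n + (q * N + 1 - A) + A) * a (n + (q * N + 1 - A) + A)) =
      fun n => χ (n + 1) * a (n + (q * N + 1)) := by
    funext n
    rw [add_assoc, Nat.sub_add_cancel hA, ← add_assoc n]
    exact congrArg (· * _) (hχ.periodic.nat_mul q n)
  have htail := (summable_nat_add_iff (q * N + 1)).mpr ha
  have hsummable : Summable fun n => χ (n + A) * a (n + A) :=
    (summable_nat_add_iff (q * N + 1 - A)).mp
      (hshift ▸ (summable_norm_mul_of_periodic hχ.periodic hN htail).of_norm)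
  rw [← hsummable.sum_add_tsum_nat_add (q * N + 1 - A), hshift, hχ.tsum_mul_eq_abelSum hN K htail,
    sum_Ico_eq_sum_range]
  simp only [add_comm A]

lemma abelSum_eval {𝕜 : Type*} [NormedField 𝕜] (N : ℕ) (c : ℕ → 𝕜) {K : ℕ} {Q : 𝕜[X]}
    (hQ : Q.natDegree < K) (B : ℕ) :
    abelSum N c K (fun n => Q.eval ((n + B : ℕ) : 𝕜)) =
      abelBoundary N c K fun n => Q.eval ((n + B : ℕ) : 𝕜) := by
  simp only [abelSum, fwdDiff_iter_eval_natCast_add_eq_zero hQ, mul_zero, tsum_zero, add_zero]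

theorem IsMomentSequence.abelSum_eval_derivative {𝕜 : Type*} [NormedField 𝕜] [Algebra ℚ 𝕜]
    {N : ℕ} {χ ψ : ℕ → 𝕜} (hψ : IsMomentSequence N χ ψ)
    (hχ : ZeroMeanPeriodic N fun n => χ (n + 1)) (hN : N ≠ 0) {K : ℕ} {Q : 𝕜[X]}
    (hQ : Q.natDegree < K) (q : ℕ) :
    abelSum N (fun n => χ (n + 1)) K
        (fun n => (derivative Q).eval ((n + (q * N + 1) : ℕ) : 𝕜)) =
      -momentForm ψ Q - ∑ n ∈ Ico 1 (q * N + 1), χ n * (derivative Q).eval (n : 𝕜) := by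
  have : CharZero 𝕜 := algebraRat.charZero 𝕜
  have hderiv : (derivative Q).natDegree < K :=
    ((natDegree_derivative_le Q).trans (Nat.sub_le _ _)).trans_lt hQ
  rw [abelSum_eval N _ hderiv, Ico_add_one_right_eq_Icc, sum_Icc_one_eq_sum_range,
    hχ.sum_range_mul_eval_eq_abelBoundary_sub hderiv, hψ.abelBoundary_eval_derivative hχ hN hQ]
  ring

lemma momentForm_map_ofReal (ψ : ℕ → ℂ) (Q : ℝ[X]) :
    momentForm ψ (Q.map Complex.ofRealHom) = PsiPolyR ψ Q := by
  rw [PsiPolyR, ← support_map_of_injective Q Complex.ofRealHom.injective]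
  simp [momentForm, sum_def]

theorem IsMomentSequence.abelSum_dirichletTerm {N : ℕ} {χ ψ : ℕ → ℂ} (hψ : IsMomentSequence N χ ψ)
    (hχ : ZeroMeanPeriodic N fun n => χ (n + 1)) (hN : N ≠ 0) {P : ℝ[X]} {K m : ℕ} (hm : 1 ≤ m)
    (hK : m * P.natDegree < K) (q : ℕ) :
    abelSum N (fun n => χ (n + 1)) K
        (fun n => dirichletTerm P (1 - m) (n + (q * N + 1) : ℕ)) =
      -(1 / m) * PsiPolyR ψ (P ^ m) -
        ∑ n ∈ Ico 1 (q * N + 1), χ n * dirichletTerm P (1 - m) n := by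
  have hdegree : ((m : ℂ)⁻¹ • (P ^ m).map Complex.ofRealHom).natDegree < K :=
    (natDegree_smul_le _ _).trans_lt (by rwa [natDegree_map, natDegree_pow])
  simp only [dirichletTerm_one_sub_natCast_eq_eval_derivative P hm, Complex.ofReal_natCast]
  rw [hψ.abelSum_eval_derivative hχ hN hdegree, map_smul, momentForm_map_ofReal, smul_eq_mul,
    one_div, neg_mul]

lemma zeroMeanPeriodic_comp_succ {𝕜 : Type*} [Field 𝕜] {N : ℕ} {χ : ℕ → 𝕜}
    (hper : ∀ n, 1 ≤ n → χ (n + N) = χ n) (hsum : ∑ n ∈ Icc 1 N, χ n = 0) :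
    ZeroMeanPeriodic N fun n => χ (n + 1) where
  periodic n := by simp only [Nat.add_right_comm n N, hper _ n.succ_pos]
  sum_range_eq_zero := by rw [← sum_Icc_one_eq_sum_range, hsum]

lemma apply_one_sub_natCast_eq_of_forall_one_lt_re {E : Type*} [NormedAddCommGroup E]
    [NormedSpace ℂ E] [CompleteSpace E] {F G : ℂ → E} (m : ℕ)
    (hF : DifferentiableOn ℂ F (Metric.ball 2 (m + 2)))
    (hG : DifferentiableOn ℂ G (Metric.ball 2 (m + 2)))
    (hFG : ∀ s : ℂ, 1 < s.re → F s = G s) : F (1 - m) = G (1 - m) := by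
  have hnear : F =ᶠ[nhds 2] G := by
    filter_upwards [(isOpen_lt continuous_const Complex.continuous_re).mem_nhds
      (show (1 : ℝ) < (2 : ℂ).re by simp)] with s hs using hFG s hs
  have hmem : (1 - m : ℂ) ∈ Metric.ball (2 : ℂ) (m + 2) := by
    have hdist : (2 - (1 - m) : ℂ) = (m + 1 : ℕ) := by push_cast; ring
    rw [Metric.mem_ball', Complex.dist_eq, hdist, Complex.norm_natCast]
    push_cast
    linarith
  exact (hF.analyticOnNhd Metric.isOpen_ball).eqOn_of_preconnected_of_eventuallyEq
    (hG.analyticOnNhd Metric.isOpen_ball) (convex_ball _ _).isPreconnected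
    (Metric.mem_ball_self (by positivity)) hnear hmem

end SpecialValue

theorem dirichlet_like_values_at_negative_integers_general
    {N : ℕ} (hN : 1 ≤ N) {χ : ℕ → ℂ}
    (hper : ∀ n : ℕ, 1 ≤ n → χ (n + N) = χ n)
    (hsum : ∑ n ∈ Finset.Icc 1 N, χ n = 0)
    {ψ : ℕ → ℂ} (hψ : IsMomentSequence N χ ψ)
    {P : Polynomial ℝ} (hP : 1 ≤ P.natDegree) (hlead : 0 < P.leadingCoeff)
    {A : ℕ} (hA : 1 ≤ A) (hne : ∀ n : ℕ, A ≤ n → P.eval (n : ℝ) ≠ 0)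
    {m : ℕ} (hm : 0 < m) {F : ℂ → ℂ} (hF : DifferentiableOn ℂ F {s | -(m : ℝ) < s.re})
    (hFs : ∀ s : ℂ, 1 < s.re →
      F s = ∑' n : ℕ,
        χ (n + A) * (Complex.ofReal ((Polynomial.derivative P).eval ((n + A : ℕ) : ℝ))) /
          (Complex.ofReal (P.eval ((n + A : ℕ) : ℝ))) ^ s) :
    F (1 - (m : ℂ)) = -(1 / (m : ℂ)) * PsiPolyR ψ (P ^ m) -
      ∑ n ∈ Finset.Ico 1 A,
        χ n * (Complex.ofReal ((Polynomial.derivative P).eval (n : ℝ))) *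
          (Complex.ofReal (P.eval (n : ℝ))) ^ (m - 1) := by
  have hχ := zeroMeanPeriodic_comp_succ hper hsum
  have hN₀ := Nat.one_le_iff_ne_zero.mp hN
  have hP₀ := Nat.one_le_iff_ne_zero.mp hP
  obtain ⟨q, hAq, htail⟩ := hχ.exists_differentiableOn_abelSum_dirichletTerm hN₀ hP₀ hlead
    (Nat.lt_succ_self (P.natDegree * (m + 1))) A
  have hhead : DifferentiableOn ℂ (fun s => ∑ n ∈ Finset.Ico A (q * N + 1),
      χ n * dirichletTerm P s n) (Metric.ball 2 (m + 2)) :=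
    .fun_sum fun n hn => ((differentiable_dirichletTerm
      (hne n (Finset.mem_Ico.mp hn).1)).const_mul _).differentiableOn
  have hF' : DifferentiableOn ℂ F (Metric.ball 2 (m + 2)) := hF.mono fun s hs => by
    have := re_sub_dist_le_re s 2
    rw [Complex.re_ofNat] at this
    exact Set.mem_ofPred.mpr (by linarith [Metric.mem_ball.mp hs])
  have hvalue := apply_one_sub_natCast_eq_of_forall_one_lt_re m hF' (hhead.fun_add htail)
      fun s hs => by
    rw [hFs s hs, ← hχ.tsum_nat_add_eq_sum_Ico_add_abelSum hN₀ _
      (summable_norm_dirichletTerm hP₀ hlead hs) hAq]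
    simp only [dirichletTerm, mul_div_assoc]
  rw [hvalue, hψ.abelSum_dirichletTerm hχ hN₀ hm (by nlinarith),
    ← Finset.sum_Ico_consecutive _ hA hAq]
  simp only [dirichletTerm_one_sub_natCast P hm, mul_assoc]
  ring

/-- If `F` is entire and agrees with `L_{A,χ,P}(s) = Σ_{n=A}^∞ χ(n)·P'(n)/P(n)^s`
for `Re(s) > 1`, then for every `m ≥ 1`,
`F(1-m) = -(1/m)·Ψ_χ(P^m) - Σ_{n=1}^{A-1} χ(n)·P'(n)·P(n)^{m-1}`.
Here `ψ m = Ψ_χ(X^m)` is characterized by the power-series identity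
`t·(Σ_{n=1}^N χ(n)e^{nt})/(1-e^{Nt}) = -Σ_m ψ(m) t^m/m!`. -/
theorem dirichlet_like_values_at_negative_integers
    (N : ℕ) (hN : 1 ≤ N) (χ : ℕ → ℂ)
    (hper : ∀ n : ℕ, 1 ≤ n → χ (n + N) = χ n)
    (hsum : ∑ n ∈ Finset.Icc 1 N, χ n = 0)
    (ψ : ℕ → ℂ)
    (hψ : PowerSeries.X * (∑ n ∈ Finset.Icc 1 N,
        PowerSeries.C (χ n) * PowerSeries.rescale (n : ℂ) (PowerSeries.exp ℂ)) =
      (1 - PowerSeries.rescale (N : ℂ) (PowerSeries.exp ℂ)) *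
        (- PowerSeries.mk fun m => ψ m / (m.factorial : ℂ)))
    (P : Polynomial ℝ) (d : ℕ) (hd : 1 ≤ d) (hdeg : P.natDegree = d)
    (hlead : 0 < P.leadingCoeff)
    (A : ℕ) (hA : 1 ≤ A) (hpos : ∀ n : ℕ, A ≤ n → 0 < P.eval (n : ℝ))
    (F : ℂ → ℂ) (hF : Differentiable ℂ F)
    (hFs : ∀ s : ℂ, 1 < s.re →
      F s = ∑' n : ℕ,
        χ (n + A) * (Complex.ofReal ((Polynomial.derivative P).eval ((n + A : ℕ) : ℝ))) /
          (Complex.ofReal (P.eval ((n + A : ℕ) : ℝ))) ^ s) :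
    ∀ m : ℕ, 0 < m →
      F (1 - (m : ℂ)) = -(1 / (m : ℂ)) * PsiPolyR ψ (P ^ m) -
        ∑ n ∈ Finset.Ico 1 A,
          χ n * (Complex.ofReal ((Polynomial.derivative P).eval (n : ℝ))) *
            (Complex.ofReal (P.eval (n : ℝ))) ^ (m - 1) :=
  fun _ hm => dirichlet_like_values_at_negative_integers_general hN hper hsum hψ (hdeg ▸ hd) hlead
    hA (fun n hn => (hpos n hn).ne') hm hF.differentiableOn hFs
end

section
/- For every polynomial E ∈ ℂ[X], one has Ψ_χ(E(N + X)) − Ψ_χ(E) = Σ_{n=1}^{N} χ(n)·E'(n), where E(N+X) denotes the polynomial obtained from E by substituting N + X for X. -/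
/-- The linear form `Ψ_χ` applied to a complex polynomial `Q`, where `ψ m = Ψ_χ(X^m)`. -/
noncomputable def PsiPoly (ψ : ℕ → ℂ) (Q : Polynomial ℂ) : ℂ :=
  ∑ k ∈ Q.support, Q.coeff k * ψ k

/-!
A linear form `L` on polynomials is determined by the exponential generating function
`∑ L(X^m) t^m / m!`, which one may think of as `L(e^{Xt})`. Under this dictionary precomposing `L`
with the shift by `c` multiplies the series by `e^{ct}`, precomposing with the derivative multiplies
it by `t`, and evaluation at `x` has series `e^{xt}`. The defining identity of `Ψ_χ` therefore says
that two linear forms have the same generating function.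
-/

open scoped Nat Polynomial PowerSeries

section ExpGenFun

variable {R : Type*} [CommRing R] [Algebra ℚ R]

/-- The exponential generating function `∑ L(X^m) t^m / m!` of a linear form `L` on polynomials,
depending linearly on `L`. -/
noncomputable def expGenFun : (R[X] →ₗ[R] R) →ₗ[R] R⟦X⟧ where
  toFun L := PowerSeries.mk fun m => algebraMap ℚ R (1 / m !) * L (Polynomial.X ^ m)
  map_add' L M := by
    ext m
    simp [mul_add]
  map_smul' a L := by
    ext m
    simp [mul_left_comm]

theorem coeff_expGenFun (L : R[X] →ₗ[R] R) (m : ℕ) :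
    PowerSeries.coeff m (expGenFun L) = algebraMap ℚ R (1 / m !) * L (Polynomial.X ^ m) := by
  simp only [expGenFun, LinearMap.coe_mk, AddHom.coe_mk, PowerSeries.coeff_mk]

theorem isUnit_algebraMap_one_div_factorial (m : ℕ) : IsUnit (algebraMap ℚ R (1 / m !)) :=
  (isUnit_iff_ne_zero.mpr (by positivity)).map (algebraMap ℚ R)

theorem expGenFun_injective : Function.Injective (expGenFun (R := R)) := by
  intro L M hLM
  refine Polynomial.lhom_ext' fun m => LinearMap.ext_ring ?_
  have hcoeff := congrArg (PowerSeries.coeff m) hLM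
  rw [coeff_expGenFun, coeff_expGenFun] at hcoeff
  simpa only [LinearMap.comp_apply, Polynomial.monomial_one_right_eq_X_pow] using
    (isUnit_algebraMap_one_div_factorial m).mul_left_cancel hcoeff

theorem expGenFun_leval (x : R) :
    expGenFun (Polynomial.leval x) = PowerSeries.rescale x (PowerSeries.exp R) := by
  ext m
  simp [coeff_expGenFun, PowerSeries.coeff_exp, mul_comm]

theorem expGenFun_comp_derivative (L : R[X] →ₗ[R] R) :
    expGenFun (L ∘ₗ Polynomial.derivative) = PowerSeries.X * expGenFun L := by
  ext (_ | m)
  · simp [coeff_expGenFun]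
  · have hfactorial : (1 / (m + 1)! : ℚ) * (m + 1 : ℕ) = 1 / m ! := by
      rw [Nat.factorial_succ]
      push_cast
      field_simp
    rw [PowerSeries.coeff_succ_X_mul, coeff_expGenFun, coeff_expGenFun, ← hfactorial,
      LinearMap.comp_apply, Polynomial.derivative_X_pow, Nat.add_sub_cancel,
      ← Polynomial.smul_eq_C_mul, map_smul, smul_eq_mul, map_mul, map_natCast, mul_assoc]

theorem expGenFun_comp_taylor (L : R[X] →ₗ[R] R) (c : R) :
    expGenFun (L ∘ₗ Polynomial.taylor c) =
      PowerSeries.rescale c (PowerSeries.exp R) * expGenFun L := by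
  ext m
  rw [coeff_expGenFun, PowerSeries.coeff_mul, LinearMap.comp_apply, Polynomial.taylor_X_pow,
    add_comm, (Commute.all _ _).add_pow', map_sum, Finset.mul_sum]
  refine Finset.sum_congr rfl fun ⟨i, j⟩ hij => ?_
  obtain rfl := Finset.HasAntidiagonal.mem_antidiagonal.mp hij
  have hchoose : (1 / (i + j)! : ℚ) * ((i + j).choose i : ℕ) = 1 / i ! * (1 / j !) := by
    rw [Nat.cast_add_choose]
    field_simp
  calc
    algebraMap ℚ R (1 / (i + j)!) *
          L ((i + j).choose i • (Polynomial.C c ^ i * Polynomial.X ^ j))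
        = algebraMap ℚ R (1 / (i + j)! * ((i + j).choose i : ℕ)) *
          (c ^ i * L (Polynomial.X ^ j)) := by
      rw [map_nsmul, ← map_pow, ← Polynomial.smul_eq_C_mul, map_smul, map_mul, map_natCast,
        nsmul_eq_mul, smul_eq_mul, mul_assoc]
    _ = PowerSeries.coeff i (PowerSeries.rescale c (PowerSeries.exp R)) *
          PowerSeries.coeff j (expGenFun L) := by
      rw [hchoose, map_mul, PowerSeries.coeff_rescale, PowerSeries.coeff_exp, coeff_expGenFun]
      ring

theorem Psi_shift_by_period_general {ι : Type*} (s : Finset ι) (w x : ι → R) (c : R)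
    (L : R[X] →ₗ[R] R)
    (hL : PowerSeries.X * (∑ i ∈ s,
        PowerSeries.C (w i) * PowerSeries.rescale (x i) (PowerSeries.exp R)) =
      (1 - PowerSeries.rescale c (PowerSeries.exp R)) * -expGenFun L)
    (E : R[X]) :
    L (E.comp (Polynomial.C c + Polynomial.X)) - L E =
      ∑ i ∈ s, w i * (Polynomial.derivative E).eval (x i) := by
  have hforms : L ∘ₗ Polynomial.taylor c - L =
      (∑ i ∈ s, w i • Polynomial.leval (x i)) ∘ₗ Polynomial.derivative := by
    apply expGenFun_injective
    calc
      expGenFun (L ∘ₗ Polynomial.taylor c - L)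
          = (1 - PowerSeries.rescale c (PowerSeries.exp R)) * -expGenFun L := by
        rw [map_sub, expGenFun_comp_taylor]
        ring
      _ = PowerSeries.X * expGenFun (∑ i ∈ s, w i • Polynomial.leval (x i)) := by
        simp only [← hL, map_sum, map_smul, expGenFun_leval, PowerSeries.smul_eq_C_mul]
      _ = expGenFun ((∑ i ∈ s, w i • Polynomial.leval (x i)) ∘ₗ Polynomial.derivative) :=
        (expGenFun_comp_derivative _).symm
  simpa [Polynomial.taylor_apply, add_comm] using LinearMap.congr_fun hforms E

end ExpGenFun

/-- `PsiPoly ψ` bundled as a linear form. -/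
noncomputable def psiForm (ψ : ℕ → ℂ) : ℂ[X] →ₗ[ℂ] ℂ :=
  Polynomial.lsum fun k => LinearMap.mulRight ℂ (ψ k)

theorem psiForm_apply (ψ : ℕ → ℂ) (Q : ℂ[X]) : psiForm ψ Q = PsiPoly ψ Q :=
  rfl

theorem expGenFun_psiForm (ψ : ℕ → ℂ) :
    expGenFun (psiForm ψ) = PowerSeries.mk fun m => ψ m / (m ! : ℂ) := by
  ext m
  have hmoment : psiForm ψ (Polynomial.X ^ m) = ψ m := by
    simp [psiForm, Polynomial.lsum_apply, Polynomial.X_pow_eq_monomial,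
      Polynomial.sum_monomial_index]
  rw [coeff_expGenFun, hmoment, PowerSeries.coeff_mk]
  simp [div_eq_inv_mul]

/-- `Ψ_χ(E(N+X)) - Ψ_χ(E) = Σ_{n=1}^N χ(n)·E'(n)` for every polynomial `E`. -/
theorem Psi_shift_by_period
    (N : ℕ) (hN : 1 ≤ N) (χ : ℕ → ℂ)
    (hper : ∀ n : ℕ, 1 ≤ n → χ (n + N) = χ n)
    (hsum : ∑ n ∈ Finset.Icc 1 N, χ n = 0)
    (ψ : ℕ → ℂ)
    (hψ : PowerSeries.X * (∑ n ∈ Finset.Icc 1 N,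
        PowerSeries.C (χ n) * PowerSeries.rescale (n : ℂ) (PowerSeries.exp ℂ)) =
      (1 - PowerSeries.rescale (N : ℂ) (PowerSeries.exp ℂ)) *
        (- PowerSeries.mk fun m => ψ m / (m.factorial : ℂ)))
    (E : Polynomial ℂ) :
    PsiPoly ψ (E.comp (Polynomial.C (N : ℂ) + Polynomial.X)) - PsiPoly ψ E =
      ∑ n ∈ Finset.Icc 1 N, χ n * (Polynomial.derivative E).eval ((n : ℕ) : ℂ) := by
  rw [← expGenFun_psiForm] at hψ
  simpa only [psiForm_apply] using
    Psi_shift_by_period_general _ χ (fun n => (n : ℂ)) _ (psiForm ψ) hψ E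
end
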